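/- Let K = ⋃_{ℓ=1}^L [a_ℓ, b_ℓ] ⊆ [−1,1] with −1 = a_1 < b_1 < a_2 < ⋯ < a_L < b_L = 1, let w be continuous and strictly positive on K, and let N ≥ 1. For each d ≥ N let V_d be any monic polynomial of degree N minimizing sslash · sslash_d among monic polynomials of degree N. Then: (i) the sequence (V_d)_{d≥N} has a subsequence converging (coefficientwise, equivalently in any norm on the space of polynomials of degree ≤ N) to a monic polynomial of degree N that minimizes ‖P/w‖_{L1(K)} among monic polynomials of degree N; and (ii) if the minimizer U of ‖P/w‖_{L1(K)} among monic polynomials of degree N is unique, then the whole sequence (V_d)_{d≥N} converges to U. -/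

import Mathlib

open MeasureTheory Filter Polynomial

/-- The `(d+1) × (d+1)` symmetric Toeplitz matrix built from a vector `y ∈ ℝ^{d+1}`,
with entries `y_{|i−j|}`. -/
noncomputable def toepFin (d : ℕ) (y : Fin (d + 1) → ℝ) :
    Matrix (Fin (d + 1)) (Fin (d + 1)) ℝ :=
  fun i j => y ⟨(((i : ℕ) : ℤ) - ((j : ℕ) : ℤ)).natAbs, by omega⟩

/-- The transplantation `P_ℓ(x) = P(((bℓ−aℓ)x + aℓ + bℓ)/2)` of a polynomial
from `[aℓ, bℓ]` to `[-1, 1]`. -/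
noncomputable def transplant (aℓ bℓ : ℝ) (P : Polynomial ℝ) : Polynomial ℝ :=
  P.comp (Polynomial.C ((bℓ - aℓ) / 2) * Polynomial.X + Polynomial.C ((aℓ + bℓ) / 2))

/-- The entries `J^ℓ_{k,n} = ∫_0^π cos(kθ) sin((n+1)θ) / w_ℓ(cos θ) dθ`, where
`w_ℓ(x) = w(((bℓ−aℓ)x + aℓ + bℓ)/2)` is the transplantation of the weight `w`. -/
noncomputable def Jent (aℓ bℓ : ℝ) (w : ℝ → ℝ) (k n : ℕ) : ℝ :=
  ∫ θ in (0:ℝ)..Real.pi,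
    Real.cos (k * θ) * Real.sin ((n + 1) * θ) /
      w (((bℓ - aℓ) * Real.cos θ + aℓ + bℓ) / 2)

/-- The weighted `L1` norm `‖P/w‖_{L1(K)} = ∑_ℓ ∫_{a_ℓ}^{b_ℓ} |P(t)|/w(t) dt`
on `K = ⋃_{ℓ<L} [a ℓ, b ℓ]`. -/
noncomputable def L1K (L : ℕ) (a b : ℕ → ℝ) (w : ℝ → ℝ) (P : Polynomial ℝ) : ℝ :=
  ∑ ℓ ∈ Finset.range L, ∫ t in (a ℓ)..(b ℓ), |P.eval t| / w t

/-- The ersatz norm `⫽P⫽_d`: the infimum of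
`∑_ℓ ((b_ℓ−a_ℓ)/2)(y^{ℓ,+}_0 + y^{ℓ,−}_0)` over vectors `y^{ℓ,±} ∈ ℝ^{d+1}` with
`y^{ℓ,+} − y^{ℓ,−} = J^{ℓ,d} W^ℓ p` and `Toep_d(y^{ℓ,±}) ⪰ 0`, where `q ℓ = W^ℓ p` is
the vector of second-kind Chebyshev coefficients of the transplantation `P_ℓ`. -/
noncomputable def ersatz (L N d : ℕ) (a b : ℕ → ℝ) (w : ℝ → ℝ) (P : Polynomial ℝ) : ℝ :=
  sInf { s : ℝ |
    ∃ q : ℕ → Fin (N + 1) → ℝ,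
      (∀ ℓ < L, transplant (a ℓ) (b ℓ) P
          = ∑ n : Fin (N + 1), Polynomial.C (q ℓ n) * Polynomial.Chebyshev.U ℝ ((n : ℕ) : ℤ)) ∧
      ∃ yp ym : ℕ → Fin (d + 1) → ℝ,
        (∀ ℓ < L, ∀ k : Fin (d + 1),
            yp ℓ k - ym ℓ k
              = ∑ n : Fin (N + 1), Jent (a ℓ) (b ℓ) w (k : ℕ) (n : ℕ) * q ℓ n) ∧
        (∀ ℓ < L, (toepFin d (yp ℓ)).PosSemidef ∧ (toepFin d (ym ℓ)).PosSemidef) ∧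
        s = ∑ ℓ ∈ Finset.range L, ((b ℓ - a ℓ) / 2) * (yp ℓ 0 + ym ℓ 0) }

/-!
Write the integral over each `[a ℓ, b ℓ]` in the angle variable of `t = affineCos (a ℓ) (b ℓ) θ`: up
to the factor `(b ℓ - a ℓ) / 2` it becomes `∫₀^π |f|` for a density `f` depending linearly on `P`,
and the constraint in `⫽P⫽_d` says that the vectors `y⁺`, `y⁻` have positive semidefinite Toeplitz
matrices and differ by the cosine moments of `f` up to order `d`. The moments of the positive and
negative parts of `f` are admissible, whence `⫽P⫽_d ≤ ‖P/w‖`. Conversely, the trigonometric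
polynomial attached by Fejér's construction to a vector with positive semidefinite Toeplitz matrix
is nonnegative, so that splitting the Fejér mean `σ_d f` along `y⁺`, `y⁻` bounds `∫₀^π |σ_d f|` by
`y⁺₀ + y⁻₀`. Hence `‖P/w‖ ≤ ⫽P⫽_d` up to `∫₀^π |σ_d f - f|`, which tends to `0`, uniformly for `P`
in the unit ball of the finite-dimensional space of polynomials of degree at most `N`. As the `L¹`
norm is coercive there, the minimizers of `⫽·⫽_d` stay bounded, and each of their cluster points
minimizes the `L¹` norm.
-/

lemma integral_sum_sum {ι : Type*} [Fintype ι] {a b : ℝ} {f : ι → ι → ℝ → ℝ}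
    (hf : ∀ i j, IntervalIntegrable (f i j) volume a b) :
    ∫ θ in a..b, ∑ i, ∑ j, f i j θ = ∑ i, ∑ j, ∫ θ in a..b, f i j θ := by
  rw [intervalIntegral.integral_finsetSum fun i _ ↦ by
    simpa only [Finset.sum_fn] using IntervalIntegrable.sum Finset.univ fun j _ ↦ hf i j]
  exact Finset.sum_congr rfl fun i _ ↦ intervalIntegral.integral_finsetSum fun j _ ↦ hf i j

section Toeplitz

variable {d : ℕ}

/-- The cosine moments `∫₀^π cos(kθ) f(θ) dθ`, `0 ≤ k ≤ d`, of a function on `[0, π]`. -/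
noncomputable def cosMoments (d : ℕ) (f : ℝ → ℝ) : Fin (d + 1) → ℝ :=
  fun k ↦ ∫ θ in (0 : ℝ)..Real.pi, Real.cos (k * θ) * f θ

lemma intervalIntegrable_cos_mul {f : ℝ → ℝ} (hf : IntervalIntegrable f volume 0 Real.pi)
    (c : ℝ) : IntervalIntegrable (fun θ ↦ Real.cos (c * θ) * f θ) volume 0 Real.pi :=
  hf.continuousOn_mul (by fun_prop)

lemma cosMoments_add {f g : ℝ → ℝ} (hf : IntervalIntegrable f volume 0 Real.pi)
    (hg : IntervalIntegrable g volume 0 Real.pi) :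
    cosMoments d (f + g) = cosMoments d f + cosMoments d g := by
  ext k
  simp only [cosMoments, Pi.add_apply, mul_add]
  exact intervalIntegral.integral_add (intervalIntegrable_cos_mul hf k)
    (intervalIntegrable_cos_mul hg k)

lemma cosMoments_smul (c : ℝ) (f : ℝ → ℝ) : cosMoments d (c • f) = c • cosMoments d f := by
  ext k
  simp only [cosMoments, Pi.smul_apply, smul_eq_mul, mul_left_comm _ c,
    intervalIntegral.integral_const_mul]

lemma cosMoments_sub {f g : ℝ → ℝ} (hf : IntervalIntegrable f volume 0 Real.pi)
    (hg : IntervalIntegrable g volume 0 Real.pi) :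
    cosMoments d (f - g) = cosMoments d f - cosMoments d g := by
  rw [eq_sub_iff_add_eq, ← cosMoments_add (f := f - g) (hf.sub hg) hg, sub_add_cancel]

lemma cosMoments_apply_zero (f : ℝ → ℝ) :
    cosMoments d f 0 = ∫ θ in (0 : ℝ)..Real.pi, f θ := by
  simp [cosMoments]

lemma cos_natAbs_sub_mul (i j : ℕ) (θ : ℝ) :
    Real.cos (((i : ℤ) - j).natAbs * θ) = Real.cos ((i - j) * θ) := by
  rw [Nat.cast_natAbs, Int.cast_abs, Int.cast_sub, Int.cast_natCast, Int.cast_natCast,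
    ← Real.cos_abs, abs_mul, abs_abs, ← abs_mul, Real.cos_abs]

lemma sum_sum_mul_cos_sub {ι : Type*} [Fintype ι] (x t : ι → ℝ) :
    ∑ i, ∑ j, x i * x j * Real.cos (t i - t j)
      = (∑ i, x i * Real.cos (t i)) ^ 2 + (∑ i, x i * Real.sin (t i)) ^ 2 := by
  simp_rw [sq, Finset.sum_mul_sum, ← Finset.sum_add_distrib, Real.cos_sub]
  exact Finset.sum_congr rfl fun i _ ↦ Finset.sum_congr rfl fun j _ ↦ by ring

lemma dotProduct_toepFin_cosMoments_mulVec {f : ℝ → ℝ}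
    (hf : IntervalIntegrable f volume 0 Real.pi) (x : Fin (d + 1) → ℝ) :
    x ⬝ᵥ (toepFin d (cosMoments d f)).mulVec x
      = ∫ θ in (0 : ℝ)..Real.pi,
          ((∑ i, x i * Real.cos (i * θ)) ^ 2 + (∑ i, x i * Real.sin (i * θ)) ^ 2) * f θ := by
  have hint (i j : Fin (d + 1)) : IntervalIntegrable
      (fun θ ↦ x i * x j * (Real.cos ((i - j) * θ) * f θ)) volume 0 Real.pi :=
    (intervalIntegrable_cos_mul hf _).const_mul _
  simp only [← sum_sum_mul_cos_sub, Finset.sum_mul, mul_assoc, ← sub_mul] at hint ⊢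
  simp only [integral_sum_sum hint, dotProduct, Matrix.mulVec, Finset.mul_sum]
  refine Finset.sum_congr rfl fun i _ ↦ Finset.sum_congr rfl fun j _ ↦ ?_
  simp only [intervalIntegral.integral_const_mul, toepFin, cosMoments, cos_natAbs_sub_mul]
  ring

lemma isHermitian_toepFin (y : Fin (d + 1) → ℝ) : (toepFin d y).IsHermitian := by
  ext i j
  simp only [Matrix.conjTranspose_apply, star_trivial, toepFin]
  congr 2
  omega

lemma posSemidef_toepFin_cosMoments {f : ℝ → ℝ} (hf : IntervalIntegrable f volume 0 Real.pi)
    (hf0 : ∀ θ ∈ Set.Icc 0 Real.pi, 0 ≤ f θ) : (toepFin d (cosMoments d f)).PosSemidef := by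
  refine .of_dotProduct_mulVec_nonneg (isHermitian_toepFin _) fun x ↦ ?_
  rw [star_trivial, dotProduct_toepFin_cosMoments_mulVec hf]
  refine intervalIntegral.integral_nonneg Real.pi_pos.le fun θ hθ ↦ ?_
  have := hf0 θ hθ
  positivity

/-- A pair of vectors with positive semidefinite Toeplitz matrices whose difference is the vector
of cosine moments of `f`: the constraint set of the ersatz norm on one interval. -/
structure IsToeplitzSplitting (d : ℕ) (f : ℝ → ℝ) (yp ym : Fin (d + 1) → ℝ) : Prop where
  sub_eq : yp - ym = cosMoments d f
  posSemidef_left : (toepFin d yp).PosSemidef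
  posSemidef_right : (toepFin d ym).PosSemidef

lemma IsToeplitzSplitting.add_apply_zero_nonneg {f : ℝ → ℝ} {yp ym : Fin (d + 1) → ℝ}
    (h : IsToeplitzSplitting d f yp ym) : 0 ≤ yp 0 + ym 0 :=
  add_nonneg (h.posSemidef_left.diag_nonneg (i := 0)) (h.posSemidef_right.diag_nonneg (i := 0))

lemma intervalIntegrable_posPart {f : ℝ → ℝ} {a b : ℝ} (hf : IntervalIntegrable f volume a b) :
    IntervalIntegrable f⁺ volume a b :=
  ⟨hf.1.pos_part, hf.2.pos_part⟩

lemma intervalIntegrable_negPart {f : ℝ → ℝ} {a b : ℝ} (hf : IntervalIntegrable f volume a b) :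
    IntervalIntegrable f⁻ volume a b :=
  ⟨hf.1.neg_part, hf.2.neg_part⟩

lemma isToeplitzSplitting_posPart_negPart {f : ℝ → ℝ}
    (hf : IntervalIntegrable f volume 0 Real.pi) :
    IsToeplitzSplitting d f (cosMoments d f⁺) (cosMoments d f⁻) where
  sub_eq := by
    rw [← cosMoments_sub (intervalIntegrable_posPart hf) (intervalIntegrable_negPart hf),
      posPart_sub_negPart]
  posSemidef_left := posSemidef_toepFin_cosMoments (intervalIntegrable_posPart hf) fun θ _ ↦
    posPart_nonneg f θ
  posSemidef_right := posSemidef_toepFin_cosMoments (intervalIntegrable_negPart hf) fun θ _ ↦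
    negPart_nonneg f θ

lemma cosMoments_posPart_add_negPart_apply_zero {f : ℝ → ℝ}
    (hf : IntervalIntegrable f volume 0 Real.pi) :
    cosMoments d f⁺ 0 + cosMoments d f⁻ 0 = ∫ θ in (0 : ℝ)..Real.pi, |f θ| := by
  rw [← Pi.add_apply, ← cosMoments_add (intervalIntegrable_posPart hf)
    (intervalIntegrable_negPart hf), posPart_add_negPart, cosMoments_apply_zero]
  rfl

end Toeplitz

section Fejer

variable {d : ℕ}

lemma integral_cos_int_mul (n : ℤ) :
    ∫ θ in (0 : ℝ)..Real.pi, Real.cos (n * θ) = if n = 0 then Real.pi else 0 := by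
  split_ifs with hn
  · simp [hn]
  · rw [intervalIntegral.integral_comp_mul_left Real.cos (by exact_mod_cast hn)]
    simp [Real.sin_int_mul_pi]

lemma integral_cos_mul_cos_nat (j k : ℕ) :
    ∫ θ in (0 : ℝ)..Real.pi, Real.cos (j * θ) * Real.cos (k * θ)
      = if j = k then (if k = 0 then Real.pi else Real.pi / 2) else 0 := by
  have product_to_sum (θ : ℝ) : Real.cos (j * θ) * Real.cos (k * θ)
      = (1 / 2) * (Real.cos ((j - k : ℤ) * θ) + Real.cos ((j + k : ℤ) * θ)) := by
    push_cast
    rw [sub_mul, add_mul, Real.cos_sub, Real.cos_add]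
    ring
  simp_rw [product_to_sum]
  rw [intervalIntegral.integral_const_mul, intervalIntegral.integral_add
    (Continuous.intervalIntegrable (by fun_prop) _ _)
    (Continuous.intervalIntegrable (by fun_prop) _ _), integral_cos_int_mul, integral_cos_int_mul]
  split_ifs <;> first | omega | ring

/-- The Fejér mean `(π(d+1))⁻¹ ∑ᵢⱼ y_{|i-j|} cos((i-j)θ)`, `0 ≤ i, j ≤ d`, of a vector of cosine
moments. Written as a double sum it is a quadratic form of the Toeplitz matrix of `y`. -/
noncomputable def fejerMean (d : ℕ) : (Fin (d + 1) → ℝ) →ₗ[ℝ] ℝ → ℝ where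
  toFun y θ := (Real.pi * (d + 1))⁻¹ * ∑ i : Fin (d + 1), ∑ j : Fin (d + 1),
    toepFin d y i j * Real.cos ((i - j) * θ)
  map_add' y z := by
    ext θ
    simp only [toepFin, Pi.add_apply, add_mul, Finset.sum_add_distrib, mul_add]
  map_smul' c y := by
    ext θ
    simp only [toepFin, Pi.smul_apply, smul_eq_mul, mul_assoc, ← Finset.mul_sum, RingHom.id_apply]
    ring

lemma fejerMean_apply (y : Fin (d + 1) → ℝ) (θ : ℝ) :
    fejerMean d y θ = (Real.pi * (d + 1))⁻¹ * ∑ i : Fin (d + 1), ∑ j : Fin (d + 1),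
      toepFin d y i j * Real.cos ((i - j) * θ) :=
  rfl

@[fun_prop]
lemma continuous_fejerMean (y : Fin (d + 1) → ℝ) : Continuous (fejerMean d y) := by
  unfold fejerMean
  simp only [LinearMap.coe_mk, AddHom.coe_mk]
  fun_prop

lemma fejerMean_nonneg {y : Fin (d + 1) → ℝ} (hy : (toepFin d y).PosSemidef) (θ : ℝ) :
    0 ≤ fejerMean d y θ := by
  refine mul_nonneg (by positivity) ?_
  convert add_nonneg (hy.dotProduct_mulVec_nonneg fun i ↦ Real.cos (i * θ))
    (hy.dotProduct_mulVec_nonneg fun i ↦ Real.sin (i * θ)) using 1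
  simp only [dotProduct, Matrix.mulVec, star_trivial, Finset.mul_sum, ← Finset.sum_add_distrib,
    Pi.star_apply, sub_mul, Real.cos_sub]
  exact Finset.sum_congr rfl fun i _ ↦ Finset.sum_congr rfl fun j _ ↦ by ring

lemma integral_fejerMean (y : Fin (d + 1) → ℝ) :
    ∫ θ in (0 : ℝ)..Real.pi, fejerMean d y θ = y 0 := by
  have hcos (i j : Fin (d + 1)) : ∫ θ in (0 : ℝ)..Real.pi, Real.cos ((i - j) * θ)
      = if i = j then Real.pi else 0 := by
    simpa [sub_eq_zero, Fin.val_inj] using integral_cos_int_mul ((i : ℤ) - j)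
  simp only [fejerMean_apply]
  rw [intervalIntegral.integral_const_mul, integral_sum_sum
    fun i j ↦ Continuous.intervalIntegrable (by fun_prop) _ _]
  simp only [intervalIntegral.integral_const_mul, hcos, mul_ite, mul_zero, Finset.sum_ite_eq,
    Finset.mem_univ, if_true, toepFin, sub_self, Int.natAbs_zero, Fin.mk_zero', Finset.sum_const,
    Finset.card_univ, Fintype.card_fin, nsmul_eq_mul, Nat.cast_add_one]
  field_simp

lemma IsToeplitzSplitting.integral_abs_fejerMean_le {f : ℝ → ℝ} {yp ym : Fin (d + 1) → ℝ}
    (h : IsToeplitzSplitting d f yp ym) :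
    ∫ θ in (0 : ℝ)..Real.pi, |fejerMean d (cosMoments d f) θ| ≤ yp 0 + ym 0 := by
  rw [← integral_fejerMean yp, ← integral_fejerMean ym, ← intervalIntegral.integral_add
    (Continuous.intervalIntegrable (by fun_prop) _ _)
    (Continuous.intervalIntegrable (by fun_prop) _ _)]
  refine intervalIntegral.integral_mono_on Real.pi_pos.le
    (Continuous.intervalIntegrable (by fun_prop) _ _)
    (Continuous.intervalIntegrable (by fun_prop) _ _) fun θ _ ↦ ?_
  have hp := fejerMean_nonneg h.posSemidef_left θ
  have hm := fejerMean_nonneg h.posSemidef_right θ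
  rw [← h.sub_eq, map_sub, Pi.sub_apply, abs_le]
  constructor <;> linarith

lemma integral_abs_fejerMean_cosMoments_le {f : ℝ → ℝ}
    (hf : IntervalIntegrable f volume 0 Real.pi) :
    ∫ θ in (0 : ℝ)..Real.pi, |fejerMean d (cosMoments d f) θ|
      ≤ ∫ θ in (0 : ℝ)..Real.pi, |f θ| :=
  (isToeplitzSplitting_posPart_negPart hf).integral_abs_fejerMean_le.trans_eq
    (cosMoments_posPart_add_negPart_apply_zero hf)

lemma sum_ite_eq_add {n k : ℕ} (hk : k ≤ n) :
    ∑ i : Fin n, ∑ j : Fin n, (if (j : ℕ) = i + k then (1 : ℝ) else 0) = n - k := by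
  have inner (i : ℕ) :
      ∑ j : Fin n, (if (j : ℕ) = i + k then (1 : ℝ) else 0) = if i + k < n then 1 else 0 := by
    rw [Fin.sum_univ_eq_sum_range (fun j ↦ if j = i + k then (1 : ℝ) else 0) n]
    simp
  have filter_eq : (Finset.range n).filter (fun i ↦ i + k < n) = Finset.range (n - k) := by
    ext i
    simp only [Finset.mem_filter, Finset.mem_range]
    omega
  simp_rw [inner]
  rw [Fin.sum_univ_eq_sum_range (fun i ↦ if i + k < n then (1 : ℝ) else 0) n, Finset.sum_boole,
    filter_eq, Finset.card_range, Nat.cast_sub hk]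

lemma sum_ite_natAbs_sub_eq {n k : ℕ} (hk : k ≤ n) :
    ∑ i : Fin n, ∑ j : Fin n, (if ((i : ℤ) - j).natAbs = k then (1 : ℝ) else 0)
      = if k = 0 then (n : ℝ) else 2 * (n - k) := by
  split_ifs with h0
  · have (i j : Fin n) : ((i : ℤ) - j).natAbs = k ↔ i = j := by omega
    simp [this]
  · have hsplit (i j : Fin n) : (if ((i : ℤ) - j).natAbs = k then (1 : ℝ) else 0)
        = (if (j : ℕ) = i + k then 1 else 0) + if (i : ℕ) = j + k then 1 else 0 := by
      split_ifs <;> first | omega | norm_num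
    simp_rw [hsplit, Finset.sum_add_distrib]
    rw [sum_ite_eq_add hk, Finset.sum_comm, sum_ite_eq_add hk]
    ring

lemma fejerMean_cosMoments_cos {k : ℕ} (hk : k ≤ d) (θ : ℝ) :
    fejerMean d (cosMoments d fun t ↦ Real.cos (k * t)) θ
      = (1 - k / (d + 1)) * Real.cos (k * θ) := by
  have hterm (i j : Fin (d + 1)) :
      toepFin d (cosMoments d fun t ↦ Real.cos (k * t)) i j * Real.cos ((i - j) * θ)
        = (if k = 0 then Real.pi else Real.pi / 2) * Real.cos (k * θ)
          * if ((i : ℤ) - j).natAbs = k then 1 else 0 := by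
    simp only [toepFin, cosMoments, integral_cos_mul_cos_nat, ← cos_natAbs_sub_mul]
    split_ifs with h <;> simp [h]
  have hd : (d : ℝ) + 1 ≠ 0 := by positivity
  rw [fejerMean_apply]
  simp_rw [hterm, ← Finset.mul_sum]
  rw [sum_ite_natAbs_sub_eq (hk.trans d.le_succ)]
  split_ifs with h0 <;> push_cast <;> field_simp
  simp [h0]

end Fejer

section FejerError

variable {d : ℕ} {f g : ℝ → ℝ}

/-- The `L¹(0, π)` distance between a function and the Fejér mean of its cosine moments. -/
noncomputable def fejerError (d : ℕ) (f : ℝ → ℝ) : ℝ :=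
  ∫ θ in (0 : ℝ)..Real.pi, |fejerMean d (cosMoments d f) θ - f θ|

lemma intervalIntegrable_fejerMean_sub (hf : IntervalIntegrable f volume 0 Real.pi)
    (y : Fin (d + 1) → ℝ) :
    IntervalIntegrable (fun θ ↦ fejerMean d y θ - f θ) volume 0 Real.pi :=
  (Continuous.intervalIntegrable (by fun_prop) _ _).sub hf

lemma fejerError_nonneg : 0 ≤ fejerError d f :=
  intervalIntegral.integral_nonneg Real.pi_pos.le fun _ _ ↦ abs_nonneg _

lemma fejerError_zero : fejerError d 0 = 0 := by
  have : cosMoments d 0 = 0 := by simpa using cosMoments_smul (d := d) 0 0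
  simp [fejerError, this]

lemma fejerError_add_le (hf : IntervalIntegrable f volume 0 Real.pi)
    (hg : IntervalIntegrable g volume 0 Real.pi) :
    fejerError d (f + g) ≤ fejerError d f + fejerError d g := by
  have hf' := intervalIntegrable_fejerMean_sub hf (cosMoments d f)
  have hg' := intervalIntegrable_fejerMean_sub hg (cosMoments d g)
  rw [fejerError, fejerError, fejerError, ← intervalIntegral.integral_add hf'.abs hg'.abs]
  refine intervalIntegral.integral_mono_on Real.pi_pos.le
    (intervalIntegrable_fejerMean_sub (hf.add hg) _).abs (hf'.abs.add hg'.abs) fun θ _ ↦ ?_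
  rw [cosMoments_add hf hg, map_add, Pi.add_apply, Pi.add_apply, add_sub_add_comm]
  exact abs_add_le _ _

lemma fejerError_smul (c : ℝ) (f : ℝ → ℝ) : fejerError d (c • f) = |c| * fejerError d f := by
  simp only [fejerError, cosMoments_smul, map_smul, Pi.smul_apply, smul_eq_mul, ← mul_sub,
    abs_mul, intervalIntegral.integral_const_mul]

lemma fejerError_sum_le {ι : Type*} (s : Finset ι) (c : ι → ℝ) {f : ι → ℝ → ℝ}
    (hf : ∀ i ∈ s, IntervalIntegrable (f i) volume 0 Real.pi) :
    fejerError d (∑ i ∈ s, c i • f i) ≤ ∑ i ∈ s, |c i| * fejerError d (f i) := by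
  simp_rw [← fejerError_smul]
  exact Finset.le_sum_of_subadditive_on_pred _ (IntervalIntegrable · volume 0 Real.pi)
    fejerError_zero.le (fun _ _ ↦ fejerError_add_le) (fun _ _ ↦ .add) _
    fun i hi ↦ (hf i hi).smul (c i)

lemma fejerError_le (hf : IntervalIntegrable f volume 0 Real.pi) :
    fejerError d f ≤ 2 * ∫ θ in (0 : ℝ)..Real.pi, |f θ| := by
  have hmean : IntervalIntegrable (fun θ ↦ |fejerMean d (cosMoments d f) θ|) volume 0 Real.pi :=
    Continuous.intervalIntegrable (by fun_prop) _ _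
  calc fejerError d f
      ≤ ∫ θ in (0 : ℝ)..Real.pi, (|fejerMean d (cosMoments d f) θ| + |f θ|) :=
        intervalIntegral.integral_mono_on Real.pi_pos.le
          (intervalIntegrable_fejerMean_sub hf _).abs (hmean.add hf.abs) fun θ _ ↦ abs_sub _ _
    _ = (∫ θ in (0 : ℝ)..Real.pi, |fejerMean d (cosMoments d f) θ|)
          + ∫ θ in (0 : ℝ)..Real.pi, |f θ| := intervalIntegral.integral_add hmean hf.abs
    _ ≤ 2 * ∫ θ in (0 : ℝ)..Real.pi, |f θ| := by
        linarith [integral_abs_fejerMean_cosMoments_le (d := d) hf]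

lemma tendsto_fejerError_cos (k : ℕ) :
    Tendsto (fun d ↦ fejerError d fun θ ↦ Real.cos (k * θ)) atTop (nhds 0) := by
  have formula : ∀ᶠ d : ℕ in atTop, ((k : ℝ) * ∫ θ in (0 : ℝ)..Real.pi, |Real.cos (k * θ)|)
      * (1 / ((d : ℝ) + 1)) = fejerError d fun θ ↦ Real.cos (k * θ) := by
    filter_upwards [eventually_ge_atTop k] with d hd
    simp only [fejerError, fejerMean_cosMoments_cos hd]
    rw [mul_right_comm, ← intervalIntegral.integral_const_mul]
    refine intervalIntegral.integral_congr fun θ _ ↦ ?_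
    rw [← abs_of_nonneg (show (0 : ℝ) ≤ k * (1 / (d + 1)) by positivity), ← abs_mul, ← abs_neg]
    ring_nf
  refine Tendsto.congr' formula ?_
  simpa only [mul_zero] using (tendsto_one_div_add_atTop_nhds_zero_nat (𝕜 := ℝ)).const_mul
    ((k : ℝ) * ∫ θ in (0 : ℝ)..Real.pi, |Real.cos (k * θ)|)

lemma tendsto_fejerError_sum {ι : Type*} (s : Finset ι) (c : ι → ℝ) {f : ι → ℝ → ℝ}
    (hf : ∀ i ∈ s, IntervalIntegrable (f i) volume 0 Real.pi)
    (hlim : ∀ i ∈ s, Tendsto (fun d ↦ fejerError d (f i)) atTop (nhds 0)) :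
    Tendsto (fun d ↦ fejerError d (∑ i ∈ s, c i • f i)) atTop (nhds 0) := by
  refine squeeze_zero (fun _ ↦ fejerError_nonneg) (fun _ ↦ fejerError_sum_le s c hf) ?_
  simpa using tendsto_finsetSum s fun i hi ↦ (hlim i hi).const_mul |c i|

lemma tendsto_fejerError_of_approx (hf : IntervalIntegrable f volume 0 Real.pi)
    (happrox : ∀ ε > 0, ∃ g : ℝ → ℝ, IntervalIntegrable g volume 0 Real.pi ∧
      Tendsto (fun d ↦ fejerError d g) atTop (nhds 0) ∧
      ∫ θ in (0 : ℝ)..Real.pi, |f θ - g θ| ≤ ε) :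
    Tendsto (fun d ↦ fejerError d f) atTop (nhds 0) := by
  refine tendsto_order.2 ⟨fun _ hε ↦ .of_forall fun _ ↦ hε.trans_le fejerError_nonneg,
    fun ε hε ↦ ?_⟩
  obtain ⟨g, hg, hlim, hfg⟩ := happrox (ε / 4) (by positivity)
  filter_upwards [hlim.eventually_lt_const (half_pos hε)] with d hd
  have hfg_int : IntervalIntegrable (f - g) volume 0 Real.pi := hf.sub hg
  have htri := fejerError_add_le (d := d) hfg_int hg
  have hsub := fejerError_le (d := d) hfg_int
  rw [sub_add_cancel] at htri
  simp only [Pi.sub_apply] at hsub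
  linarith

lemma exists_sum_C_mul_of_natDegree_le (S : Polynomial.Sequence ℝ) {N : ℕ} {P : ℝ[X]}
    (hP : P.natDegree ≤ N) : ∃ q : ℕ → ℝ, P = ∑ n ∈ Finset.range (N + 1), C (q n) * S n := by
  have hmem : P ∈ degreeLT ℝ (N + 1) :=
    mem_degreeLT.2 ((natDegree_le_iff_degree_le.1 hP).trans_lt (by exact_mod_cast N.lt_succ_self))
  rw [← S.span_degreeLT fun i _ ↦ by simp, show Set.Iio (N + 1) = Finset.range (N + 1) by simp,
    Submodule.mem_span_image_finset_iff_exists_fun'] at hmem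
  obtain ⟨c, hc⟩ := hmem
  exact ⟨c, by simp_rw [← hc, smul_eq_C_mul]⟩

lemma exists_eval_cos_eq_sum (G : ℝ[X]) :
    ∃ q : ℕ → ℝ, (fun θ ↦ G.eval (Real.cos θ))
      = ∑ n ∈ Finset.range (G.natDegree + 1), q n • fun θ ↦ Real.cos (n * θ) := by
  obtain ⟨q, hq⟩ :=
    exists_sum_C_mul_of_natDegree_le (Chebyshev.chebyshevTsequence ℝ) (le_refl G.natDegree)
  refine ⟨q, funext fun θ ↦ ?_⟩
  conv_lhs => rw [hq]
  rw [eval_finsetSum, Finset.sum_apply]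
  refine Finset.sum_congr rfl fun n _ ↦ ?_
  rw [eval_mul, eval_C, Pi.smul_apply, smul_eq_mul]
  congr 1
  exact_mod_cast Chebyshev.T_real_cos θ n

lemma tendsto_fejerError_of_continuous (hf : Continuous f) :
    Tendsto (fun d ↦ fejerError d f) atTop (nhds 0) := by
  refine tendsto_fejerError_of_approx (hf.intervalIntegrable _ _) fun ε hε ↦ ?_
  obtain ⟨G, hG⟩ := exists_polynomial_near_of_continuousOn (-1) 1 (fun x ↦ f (Real.arccos x))
    (hf.comp Real.continuous_arccos).continuousOn (ε / Real.pi) (by positivity)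
  have hGcont : Continuous fun θ ↦ G.eval (Real.cos θ) := G.continuous.comp Real.continuous_cos
  refine ⟨fun θ ↦ G.eval (Real.cos θ), hGcont.intervalIntegrable _ _, ?_, ?_⟩
  · obtain ⟨q, hq⟩ := exists_eval_cos_eq_sum G
    rw [hq]
    exact tendsto_fejerError_sum _ q (fun n _ ↦ Continuous.intervalIntegrable (by fun_prop) _ _)
      fun n _ ↦ tendsto_fejerError_cos n
  · calc ∫ θ in (0 : ℝ)..Real.pi, |f θ - G.eval (Real.cos θ)|
        ≤ ∫ _ in (0 : ℝ)..Real.pi, ε / Real.pi := by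
          refine intervalIntegral.integral_mono_on Real.pi_pos.le
            (Continuous.intervalIntegrable (by fun_prop) _ _)
            (Continuous.intervalIntegrable (by fun_prop) _ _) fun θ hθ ↦ ?_
          have := hG (Real.cos θ) ⟨Real.neg_one_le_cos θ, Real.cos_le_one θ⟩
          rw [Real.arccos_cos hθ.1 hθ.2, abs_sub_comm] at this
          exact this.le
      _ = ε := by
          rw [intervalIntegral.integral_const, sub_zero, smul_eq_mul]
          field_simp

lemma tendsto_fejerError (hf : IntervalIntegrable f volume 0 Real.pi) :
    Tendsto (fun d ↦ fejerError d f) atTop (nhds 0) := by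
  refine tendsto_fejerError_of_approx hf fun ε hε ↦ ?_
  obtain ⟨g, -, hfg, hg, -⟩ := Integrable.exists_hasCompactSupport_integral_sub_le hf.1 hε
  refine ⟨g, hg.intervalIntegrable _ _, tendsto_fejerError_of_continuous hg, ?_⟩
  simpa only [intervalIntegral.integral_of_le Real.pi_pos.le, Real.norm_eq_abs] using hfg

lemma IsToeplitzSplitting.integral_abs_le {yp ym : Fin (d + 1) → ℝ}
    (h : IsToeplitzSplitting d f yp ym) (hf : IntervalIntegrable f volume 0 Real.pi) :
    ∫ θ in (0 : ℝ)..Real.pi, |f θ| ≤ yp 0 + ym 0 + fejerError d f := by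
  have hmean : IntervalIntegrable (fun θ ↦ |fejerMean d (cosMoments d f) θ|) volume 0 Real.pi :=
    Continuous.intervalIntegrable (by fun_prop) _ _
  have herr := (intervalIntegrable_fejerMean_sub hf (cosMoments d f)).abs
  calc ∫ θ in (0 : ℝ)..Real.pi, |f θ|
      ≤ ∫ θ in (0 : ℝ)..Real.pi,
          (|fejerMean d (cosMoments d f) θ| + |fejerMean d (cosMoments d f) θ - f θ|) := by
        refine intervalIntegral.integral_mono_on Real.pi_pos.le hf.abs (hmean.add herr) fun θ _ ↦ ?_
        simpa using abs_sub (fejerMean d (cosMoments d f) θ)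
          (fejerMean d (cosMoments d f) θ - f θ)
    _ = (∫ θ in (0 : ℝ)..Real.pi, |fejerMean d (cosMoments d f) θ|) + fejerError d f :=
        intervalIntegral.integral_add hmean herr
    _ ≤ yp 0 + ym 0 + fejerError d f := by gcongr; exact h.integral_abs_fejerMean_le

end FejerError

section Arc

variable {a b : ℝ} {w : ℝ → ℝ}

/-- The parametrization of `[a, b]` by the angle `θ ∈ [0, π]` (traversed from `b` to `a`). -/
noncomputable def affineCos (a b θ : ℝ) : ℝ := ((b - a) * Real.cos θ + a + b) / 2

@[fun_prop]
lemma continuous_affineCos (a b : ℝ) : Continuous (affineCos a b) := by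
  unfold affineCos
  fun_prop

lemma hasDerivAt_affineCos (a b θ : ℝ) :
    HasDerivAt (affineCos a b) (-((b - a) / 2 * Real.sin θ)) θ := by
  have h := (((Real.hasDerivAt_cos θ).const_mul (b - a)).add_const a).add_const b |>.div_const 2
  exact h.congr_deriv (by ring)

lemma affineCos_mem_Ioo (hab : a < b) {θ : ℝ} (hθ : θ ∈ Set.Ioo 0 Real.pi) :
    affineCos a b θ ∈ Set.Ioo a b := by
  have hlt := Real.cos_lt_cos_of_nonneg_of_le_pi le_rfl hθ.2.le hθ.1
  have hgt := Real.cos_lt_cos_of_nonneg_of_le_pi hθ.1.le le_rfl hθ.2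
  rw [Real.cos_zero] at hlt
  rw [Real.cos_pi] at hgt
  unfold affineCos
  constructor <;> nlinarith

lemma eval_cos_transplant (a b : ℝ) (P : ℝ[X]) (θ : ℝ) :
    (transplant a b P).eval (Real.cos θ) = P.eval (affineCos a b θ) := by
  simp only [transplant, affineCos, eval_comp, eval_add, eval_mul, eval_C, eval_X]
  congr 1
  ring

lemma affineCos_deriv_nonpos (hab : a ≤ b) :
    ∀ θ ∈ Set.Ioo (min 0 Real.pi) (max 0 Real.pi), -((b - a) / 2 * Real.sin θ) ≤ 0 := by
  intro θ hθ
  rw [min_eq_left Real.pi_pos.le, max_eq_right Real.pi_pos.le] at hθ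
  have hsin := Real.sin_pos_of_mem_Ioo hθ
  have := sub_nonneg.2 hab
  exact neg_nonpos.2 (by positivity)

lemma affineCos_zero (a b : ℝ) : affineCos a b 0 = b := by
  simp [affineCos]

lemma affineCos_pi (a b : ℝ) : affineCos a b Real.pi = a := by
  simp only [affineCos, Real.cos_pi]
  ring

lemma integral_eq_integral_sin_mul_comp_affineCos (hab : a ≤ b) (g : ℝ → ℝ) :
    ∫ t in a..b, g t
      = (b - a) / 2 * ∫ θ in (0 : ℝ)..Real.pi, Real.sin θ * g (affineCos a b θ) := by
  have subst := intervalIntegral.integral_deriv_smul_comp_of_deriv_nonpos (g := g)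
    (continuous_affineCos a b).continuousOn (fun θ _ ↦ hasDerivAt_affineCos a b θ)
    (affineCos_deriv_nonpos hab)
  rw [affineCos_zero, affineCos_pi, intervalIntegral.integral_symm a b] at subst
  rw [← neg_inj, ← subst, ← intervalIntegral.integral_const_mul, ← intervalIntegral.integral_neg]
  simp only [Function.comp_apply, smul_eq_mul, neg_mul, mul_assoc]

lemma intervalIntegrable_sin_mul_comp_affineCos (hab : a < b) {g : ℝ → ℝ}
    (hg : IntervalIntegrable g volume a b) :
    IntervalIntegrable (fun θ ↦ Real.sin θ * g (affineCos a b θ)) volume 0 Real.pi := by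
  have hg' := (intervalIntegral.integrable_deriv_smul_comp_iff_of_deriv_nonpos (g := g)
    (continuous_affineCos a b).continuousOn (fun θ _ ↦ hasDerivAt_affineCos a b θ)
    (affineCos_deriv_nonpos hab.le)).2 (by simpa only [affineCos_zero, affineCos_pi] using hg.symm)
  have hne : b - a ≠ 0 := sub_ne_zero.2 hab.ne'
  refine (hg'.const_mul (-(2 / (b - a)))).congr fun θ _ ↦ ?_
  simp only [Function.comp_apply, smul_eq_mul]
  field_simp

/-- `w` is a weight on the nondegenerate interval `[a, b]`: it is positive inside the interval and
its reciprocal, by which the norms of this file are weighted, is integrable. -/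
structure IsWeightOn (w : ℝ → ℝ) (a b : ℝ) : Prop where
  lt : a < b
  pos : ∀ t ∈ Set.Ioo a b, 0 < w t
  intervalIntegrable_inv : IntervalIntegrable (fun t ↦ (w t)⁻¹) volume a b

lemma isWeightOn_of_continuousOn (hab : a < b) (hw : ContinuousOn w (Set.Icc a b))
    (hpos : ∀ t ∈ Set.Icc a b, 0 < w t) : IsWeightOn w a b where
  lt := hab
  pos t ht := hpos t (Set.Ioo_subset_Icc_self ht)
  intervalIntegrable_inv := by
    rw [← Set.uIcc_of_le hab.le] at hw hpos
    exact (hw.inv₀ fun t ht ↦ (hpos t ht).ne').intervalIntegrable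

lemma isWeightOn_of_continuousOn_biUnion {L : ℕ} {a b : ℕ → ℝ} (hab : ∀ ℓ < L, a ℓ < b ℓ)
    (hw : ContinuousOn w (⋃ ℓ ∈ Finset.range L, Set.Icc (a ℓ) (b ℓ)))
    (hpos : ∀ t ∈ ⋃ ℓ ∈ Finset.range L, Set.Icc (a ℓ) (b ℓ), 0 < w t) :
    ∀ ℓ < L, IsWeightOn w (a ℓ) (b ℓ) := by
  intro ℓ hℓ
  have hsub : Set.Icc (a ℓ) (b ℓ) ⊆ ⋃ ℓ ∈ Finset.range L, Set.Icc (a ℓ) (b ℓ) :=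
    Set.subset_iUnion₂_of_subset ℓ (Finset.mem_range.2 hℓ) subset_rfl
  exact isWeightOn_of_continuousOn (hab ℓ hℓ) (hw.mono hsub) fun t ht ↦ hpos t (hsub ht)

/-- The weight `1 / w` on `[a, b]` transported to the angle variable `θ ∈ [0, π]`; the factor
`sin θ` is the Jacobian of `affineCos a b` up to the constant `(b - a) / 2`. -/
noncomputable def arcWeight (a b : ℝ) (w : ℝ → ℝ) (θ : ℝ) : ℝ :=
  Real.sin θ * (w (affineCos a b θ))⁻¹

lemma IsWeightOn.arcWeight_nonneg (hw : IsWeightOn w a b) {θ : ℝ} (hθ : θ ∈ Set.Icc 0 Real.pi) :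
    0 ≤ arcWeight a b w θ := by
  rcases Set.eq_endpoints_or_mem_Ioo_of_mem_Icc hθ with rfl | rfl | hθ'
  · simp [arcWeight]
  · simp [arcWeight]
  · exact mul_nonneg (Real.sin_nonneg_of_mem_Icc hθ)
      (inv_nonneg.2 (hw.pos _ (affineCos_mem_Ioo hw.lt hθ')).le)

lemma IsWeightOn.intervalIntegrable_arcWeight (hw : IsWeightOn w a b) :
    IntervalIntegrable (arcWeight a b w) volume 0 Real.pi :=
  intervalIntegrable_sin_mul_comp_affineCos hw.lt hw.intervalIntegrable_inv

/-- The function `P / w` on `[a, b]` transported to the angle variable `θ ∈ [0, π]`. -/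
noncomputable def arcDensity (a b : ℝ) (w : ℝ → ℝ) (P : ℝ[X]) (θ : ℝ) : ℝ :=
  P.eval (affineCos a b θ) * arcWeight a b w θ

lemma IsWeightOn.intervalIntegrable_arcDensity (hw : IsWeightOn w a b) (P : ℝ[X]) :
    IntervalIntegrable (arcDensity a b w P) volume 0 Real.pi :=
  hw.intervalIntegrable_arcWeight.continuousOn_mul (by fun_prop)

lemma arcDensity_eq_sum {N : ℕ} {P : ℝ[X]} (hP : P.natDegree ≤ N) :
    arcDensity a b w P = ∑ i ∈ Finset.range (N + 1), P.coeff i • arcDensity a b w (X ^ i) := by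
  ext θ
  simp only [arcDensity, Finset.sum_apply, Pi.smul_apply, smul_eq_mul, eval_pow, eval_X,
    ← mul_assoc, ← Finset.sum_mul, eval_eq_sum_range' (Nat.lt_succ_of_le hP)]

lemma IsWeightOn.integral_abs_div_eq (hw : IsWeightOn w a b) (P : ℝ[X]) :
    ∫ t in a..b, |P.eval t| / w t
      = (b - a) / 2 * ∫ θ in (0 : ℝ)..Real.pi, |arcDensity a b w P θ| := by
  rw [integral_eq_integral_sin_mul_comp_affineCos hw.lt.le]
  congr 1
  refine intervalIntegral.integral_congr fun θ hθ ↦ ?_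
  rw [Set.uIcc_of_le Real.pi_pos.le] at hθ
  simp only [arcDensity, abs_mul, abs_of_nonneg (hw.arcWeight_nonneg hθ)]
  rw [arcWeight, div_eq_mul_inv, mul_left_comm]

lemma Jent_eq_integral_arcWeight (a b : ℝ) (w : ℝ → ℝ) (k n : ℕ) :
    Jent a b w k n = ∫ θ in (0 : ℝ)..Real.pi,
      Real.cos (k * θ) * ((Chebyshev.U ℝ n).eval (Real.cos θ) * arcWeight a b w θ) := by
  refine intervalIntegral.integral_congr fun θ _ ↦ ?_
  have sin_eq := Chebyshev.U_real_cos θ n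
  rw [Int.cast_natCast] at sin_eq
  simp only [arcWeight, affineCos, ← sin_eq]
  ring

lemma IsWeightOn.sum_Jent_mul_eq (hw : IsWeightOn w a b) {N d : ℕ} {P : ℝ[X]}
    {q : Fin (N + 1) → ℝ}
    (hq : transplant a b P = ∑ n : Fin (N + 1), C (q n) * Chebyshev.U ℝ ((n : ℕ) : ℤ))
    (k : Fin (d + 1)) :
    ∑ n : Fin (N + 1), Jent a b w k n * q n = cosMoments d (arcDensity a b w P) k := by
  have hint (n : Fin (N + 1)) : IntervalIntegrable (fun θ ↦ Real.cos (k * θ) *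
      ((Chebyshev.U ℝ ((n : ℕ) : ℤ)).eval (Real.cos θ) * arcWeight a b w θ)) volume 0 Real.pi :=
    intervalIntegrable_cos_mul (hw.intervalIntegrable_arcWeight.continuousOn_mul
      ((Polynomial.continuous _).comp Real.continuous_cos).continuousOn) k
  simp only [Jent_eq_integral_arcWeight, ← intervalIntegral.integral_mul_const]
  rw [← intervalIntegral.integral_finsetSum fun n _ ↦ (hint n).mul_const (q n)]
  refine intervalIntegral.integral_congr fun θ _ ↦ ?_
  simp only [arcDensity, ← eval_cos_transplant, hq, eval_finsetSum, eval_mul, eval_C,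
    Finset.sum_mul, Finset.mul_sum]
  exact Finset.sum_congr rfl fun n _ ↦ by ring

/-- The Chebyshev polynomials of the second kind, as a sequence of polynomials indexed by
degree. -/
noncomputable def chebyshevUSequence : Polynomial.Sequence ℝ where
  elems' n := Chebyshev.U ℝ n
  degree_eq' n := Chebyshev.degree_U_natCast ℝ n

lemma natDegree_transplant_le (a b : ℝ) (P : ℝ[X]) :
    (transplant a b P).natDegree ≤ P.natDegree :=
  natDegree_comp_le.trans ((Nat.mul_le_mul_left _ natDegree_linear_le).trans_eq (mul_one _))

lemma exists_transplant_eq_sum_U (a b : ℝ) {N : ℕ} {P : ℝ[X]} (hP : P.natDegree ≤ N) :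
    ∃ q : Fin (N + 1) → ℝ,
      transplant a b P = ∑ n : Fin (N + 1), C (q n) * Chebyshev.U ℝ ((n : ℕ) : ℤ) := by
  obtain ⟨q, hq⟩ := exists_sum_C_mul_of_natDegree_le chebyshevUSequence
    ((natDegree_transplant_le a b P).trans hP)
  exact ⟨fun n ↦ q n, hq.trans (Finset.sum_range _)⟩

end Arc

section Norms

variable {L N d : ℕ} {a b : ℕ → ℝ} {w : ℝ → ℝ}

/-- The values of the objective function in the definition of the ersatz norm, with the moment
constraint expressed through the densities `arcDensity (a ℓ) (b ℓ) w P` instead of Chebyshev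
coefficients. -/
def splittingValues (L d : ℕ) (a b : ℕ → ℝ) (w : ℝ → ℝ) (P : ℝ[X]) : Set ℝ :=
  {s | ∃ yp ym : ℕ → Fin (d + 1) → ℝ,
    (∀ ℓ < L, IsToeplitzSplitting d (arcDensity (a ℓ) (b ℓ) w P) (yp ℓ) (ym ℓ)) ∧
    s = ∑ ℓ ∈ Finset.range L, (b ℓ - a ℓ) / 2 * (yp ℓ 0 + ym ℓ 0)}

lemma ersatz_eq_sInf_splittingValues (hw : ∀ ℓ < L, IsWeightOn w (a ℓ) (b ℓ)) {P : ℝ[X]}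
    (hP : P.natDegree ≤ N) : ersatz L N d a b w P = sInf (splittingValues L d a b w P) := by
  unfold ersatz splittingValues
  congr 1
  ext s
  constructor
  · rintro ⟨q, hq, yp, ym, hsub, hpsd, rfl⟩
    refine ⟨yp, ym, fun ℓ hℓ ↦ ⟨funext fun k ↦ ?_, (hpsd ℓ hℓ).1, (hpsd ℓ hℓ).2⟩, rfl⟩
    rw [← (hw ℓ hℓ).sum_Jent_mul_eq (hq ℓ hℓ), ← hsub ℓ hℓ k, Pi.sub_apply]
  · rintro ⟨yp, ym, hsplit, rfl⟩
    choose q hq using fun ℓ ↦ exists_transplant_eq_sum_U (a ℓ) (b ℓ) hP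
    refine ⟨q, fun ℓ _ ↦ hq ℓ, yp, ym, fun ℓ hℓ k ↦ ?_,
      fun ℓ hℓ ↦ ⟨(hsplit ℓ hℓ).posSemidef_left, (hsplit ℓ hℓ).posSemidef_right⟩, rfl⟩
    rw [(hw ℓ hℓ).sum_Jent_mul_eq (hq ℓ), ← (hsplit ℓ hℓ).sub_eq, Pi.sub_apply]

lemma half_sub_nonneg {a b : ℝ} (hab : a ≤ b) : 0 ≤ (b - a) / 2 :=
  div_nonneg (sub_nonneg.2 hab) zero_le_two

lemma L1K_eq_sum_integral_arcDensity (hw : ∀ ℓ < L, IsWeightOn w (a ℓ) (b ℓ)) (P : ℝ[X]) :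
    L1K L a b w P = ∑ ℓ ∈ Finset.range L,
      (b ℓ - a ℓ) / 2 * ∫ θ in (0 : ℝ)..Real.pi, |arcDensity (a ℓ) (b ℓ) w P θ| :=
  Finset.sum_congr rfl fun ℓ hℓ ↦ (hw ℓ (Finset.mem_range.1 hℓ)).integral_abs_div_eq P

lemma L1K_mem_splittingValues (hw : ∀ ℓ < L, IsWeightOn w (a ℓ) (b ℓ)) (P : ℝ[X]) :
    L1K L a b w P ∈ splittingValues L d a b w P := by
  refine ⟨fun ℓ ↦ cosMoments d (arcDensity (a ℓ) (b ℓ) w P)⁺,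
    fun ℓ ↦ cosMoments d (arcDensity (a ℓ) (b ℓ) w P)⁻, fun ℓ hℓ ↦
      isToeplitzSplitting_posPart_negPart ((hw ℓ hℓ).intervalIntegrable_arcDensity P), ?_⟩
  rw [L1K_eq_sum_integral_arcDensity hw]
  refine Finset.sum_congr rfl fun ℓ hℓ ↦ ?_
  rw [cosMoments_posPart_add_negPart_apply_zero
    ((hw ℓ (Finset.mem_range.1 hℓ)).intervalIntegrable_arcDensity P)]

lemma nonneg_of_mem_splittingValues (hab : ∀ ℓ < L, a ℓ ≤ b ℓ) {P : ℝ[X]} {s : ℝ}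
    (hs : s ∈ splittingValues L d a b w P) : 0 ≤ s := by
  obtain ⟨yp, ym, hsplit, rfl⟩ := hs
  refine Finset.sum_nonneg fun ℓ hℓ ↦ ?_
  rw [Finset.mem_range] at hℓ
  exact mul_nonneg (half_sub_nonneg (hab ℓ hℓ)) (hsplit ℓ hℓ).add_apply_zero_nonneg

/-- The total error, over all the intervals, made by replacing the densities of `P` by their Fejér
means; it bounds the gap between the ersatz norm and the weighted `L¹` norm of `P`. -/
noncomputable def ersatzError (L d : ℕ) (a b : ℕ → ℝ) (w : ℝ → ℝ) (P : ℝ[X]) : ℝ :=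
  ∑ ℓ ∈ Finset.range L, (b ℓ - a ℓ) / 2 * fejerError d (arcDensity (a ℓ) (b ℓ) w P)

lemma L1K_le_add_ersatzError (hw : ∀ ℓ < L, IsWeightOn w (a ℓ) (b ℓ)) {P : ℝ[X]} {s : ℝ}
    (hs : s ∈ splittingValues L d a b w P) :
    L1K L a b w P ≤ s + ersatzError L d a b w P := by
  obtain ⟨yp, ym, hsplit, rfl⟩ := hs
  rw [L1K_eq_sum_integral_arcDensity hw, ersatzError, ← Finset.sum_add_distrib]
  refine Finset.sum_le_sum fun ℓ hℓ ↦ ?_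
  rw [Finset.mem_range] at hℓ
  rw [← mul_add]
  exact mul_le_mul_of_nonneg_left
    ((hsplit ℓ hℓ).integral_abs_le ((hw ℓ hℓ).intervalIntegrable_arcDensity P))
    (half_sub_nonneg (hw ℓ hℓ).lt.le)

lemma ersatz_le_L1K (hw : ∀ ℓ < L, IsWeightOn w (a ℓ) (b ℓ)) {P : ℝ[X]}
    (hP : P.natDegree ≤ N) : ersatz L N d a b w P ≤ L1K L a b w P := by
  rw [ersatz_eq_sInf_splittingValues hw hP]
  exact csInf_le ⟨0, fun _ ↦ nonneg_of_mem_splittingValues fun ℓ hℓ ↦ (hw ℓ hℓ).lt.le⟩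
    (L1K_mem_splittingValues hw P)

lemma L1K_le_ersatz_add_ersatzError (hw : ∀ ℓ < L, IsWeightOn w (a ℓ) (b ℓ)) {P : ℝ[X]}
    (hP : P.natDegree ≤ N) :
    L1K L a b w P ≤ ersatz L N d a b w P + ersatzError L d a b w P := by
  rw [ersatz_eq_sInf_splittingValues hw hP, ← sub_le_iff_le_add]
  exact le_csInf ⟨_, L1K_mem_splittingValues hw P⟩ fun s hs ↦
    sub_le_iff_le_add.2 (L1K_le_add_ersatzError hw hs)

lemma ersatzError_nonneg (hab : ∀ ℓ < L, a ℓ ≤ b ℓ) (P : ℝ[X]) :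
    0 ≤ ersatzError L d a b w P :=
  Finset.sum_nonneg fun ℓ hℓ ↦
    mul_nonneg (half_sub_nonneg (hab ℓ (Finset.mem_range.1 hℓ))) fejerError_nonneg

lemma ersatzError_le_sum (hw : ∀ ℓ < L, IsWeightOn w (a ℓ) (b ℓ)) {P : ℝ[X]}
    (hP : P.natDegree ≤ N) :
    ersatzError L d a b w P
      ≤ ∑ i ∈ Finset.range (N + 1), |P.coeff i| * ersatzError L d a b w (X ^ i) := by
  simp only [ersatzError, Finset.mul_sum]
  rw [Finset.sum_comm]
  refine Finset.sum_le_sum fun ℓ hℓ ↦ ?_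
  rw [Finset.mem_range] at hℓ
  simp_rw [mul_left_comm _ ((b ℓ - a ℓ) / 2), ← Finset.mul_sum]
  refine mul_le_mul_of_nonneg_left ?_ (half_sub_nonneg (hw ℓ hℓ).lt.le)
  rw [arcDensity_eq_sum hP]
  exact fejerError_sum_le _ _ fun i _ ↦ (hw ℓ hℓ).intervalIntegrable_arcDensity (X ^ i)

lemma tendsto_ersatzError (hw : ∀ ℓ < L, IsWeightOn w (a ℓ) (b ℓ)) (P : ℝ[X]) :
    Tendsto (fun d ↦ ersatzError L d a b w P) atTop (nhds 0) := by
  rw [← Finset.sum_const_zero (s := Finset.range L)]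
  refine tendsto_finsetSum _ fun ℓ hℓ ↦ ?_
  rw [← mul_zero ((b ℓ - a ℓ) / 2)]
  exact (tendsto_fejerError
    ((hw ℓ (Finset.mem_range.1 hℓ)).intervalIntegrable_arcDensity P)).const_mul _

lemma natDegree_ofFn_succ_le (v : Fin (N + 1) → ℝ) : (ofFn (N + 1) v).natDegree ≤ N :=
  Nat.le_of_lt_succ (ofFn_natDegree_lt N.succ_pos v)

lemma exists_tendsto_L1K_ofFn_le (hw : ∀ ℓ < L, IsWeightOn w (a ℓ) (b ℓ)) (N : ℕ) :
    ∃ η : ℕ → ℝ, Tendsto η atTop (nhds 0) ∧ ∀ d (v : Fin (N + 1) → ℝ),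
      L1K L a b w (ofFn (N + 1) v) ≤ ersatz L N d a b w (ofFn (N + 1) v) + η d * ‖v‖ := by
  refine ⟨fun d ↦ ∑ i ∈ Finset.range (N + 1), ersatzError L d a b w (X ^ i), ?_, fun d v ↦ ?_⟩
  · rw [← Finset.sum_const_zero (s := Finset.range (N + 1))]
    exact tendsto_finsetSum _ fun i _ ↦ tendsto_ersatzError hw _
  have hdeg := natDegree_ofFn_succ_le v
  refine (L1K_le_ersatz_add_ersatzError (d := d) hw hdeg).trans ?_
  gcongr
  rw [mul_comm, Finset.mul_sum]
  refine (ersatzError_le_sum hw hdeg).trans (Finset.sum_le_sum fun i hi ↦ ?_)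
  rw [ofFn_coeff_eq_val_of_lt v (Finset.mem_range.1 hi)]
  exact mul_le_mul_of_nonneg_right (norm_le_pi_norm v _)
    (ersatzError_nonneg (fun ℓ hℓ ↦ (hw ℓ hℓ).lt.le) _)

lemma IsWeightOn.intervalIntegrable_abs_eval_div {a b : ℝ} (hw : IsWeightOn w a b) (P : ℝ[X]) :
    IntervalIntegrable (fun t ↦ |P.eval t| / w t) volume a b := by
  simp only [div_eq_mul_inv]
  exact hw.intervalIntegrable_inv.continuousOn_mul (by fun_prop)

lemma L1K_add_le (hw : ∀ ℓ < L, IsWeightOn w (a ℓ) (b ℓ)) (P Q : ℝ[X]) :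
    L1K L a b w (P + Q) ≤ L1K L a b w P + L1K L a b w Q := by
  simp only [L1K, ← Finset.sum_add_distrib]
  refine Finset.sum_le_sum fun ℓ hℓ ↦ ?_
  have hwℓ := hw ℓ (Finset.mem_range.1 hℓ)
  have hP := hwℓ.intervalIntegrable_abs_eval_div P
  have hQ := hwℓ.intervalIntegrable_abs_eval_div Q
  rw [← intervalIntegral.integral_add hP hQ]
  refine intervalIntegral.integral_mono_on_of_le_Ioo hwℓ.lt.le
    (hwℓ.intervalIntegrable_abs_eval_div _) (hP.add hQ) fun t ht ↦ ?_
  rw [eval_add, ← add_div]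
  exact div_le_div_of_nonneg_right (abs_add_le _ _) (hwℓ.pos t ht).le

lemma L1K_smul (c : ℝ) (P : ℝ[X]) : L1K L a b w (c • P) = |c| * L1K L a b w P := by
  simp only [L1K, eval_smul, smul_eq_mul, abs_mul, mul_div_assoc,
    intervalIntegral.integral_const_mul, Finset.mul_sum]

/-- The weighted `L¹` norm as a seminorm on the space of all polynomials. -/
noncomputable def L1KSeminorm (hw : ∀ ℓ < L, IsWeightOn w (a ℓ) (b ℓ)) : Seminorm ℝ ℝ[X] :=
  Seminorm.of (L1K L a b w) (L1K_add_le hw) L1K_smul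

lemma IsWeightOn.integral_abs_eval_div_nonneg {a b : ℝ} (hw : IsWeightOn w a b) (P : ℝ[X]) :
    0 ≤ ∫ t in a..b, |P.eval t| / w t := by
  rw [hw.integral_abs_div_eq]
  exact mul_nonneg (half_sub_nonneg hw.lt.le)
    (intervalIntegral.integral_nonneg Real.pi_pos.le fun _ _ ↦ abs_nonneg _)

lemma IsWeightOn.eq_zero_of_integral_abs_eval_div_eq_zero {a b : ℝ} (hw : IsWeightOn w a b)
    {P : ℝ[X]} (hP : ∫ t in a..b, |P.eval t| / w t = 0) : P = 0 := by
  have nonneg : 0 ≤ᵐ[volume.restrict (Set.Ioo a b)] fun t ↦ |P.eval t| / w t :=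
    ae_restrict_of_forall_mem measurableSet_Ioo fun t ht ↦
      div_nonneg (abs_nonneg _) (hw.pos t ht).le
  have integrable := hw.intervalIntegrable_abs_eval_div P
  rw [intervalIntegrable_iff_integrableOn_Ioo_of_le hw.lt.le] at integrable
  rw [intervalIntegral.integral_of_le hw.lt.le, integral_Ioc_eq_integral_Ioo,
    setIntegral_eq_zero_iff_of_nonneg_ae nonneg integrable] at hP
  have ae_root : ∀ᵐ t ∂volume.restrict (Set.Ioo a b), P.IsRoot t := by
    filter_upwards [hP, ae_restrict_mem measurableSet_Ioo] with t ht hmem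
    exact abs_eq_zero.1 ((div_eq_zero_iff.1 ht).resolve_right (hw.pos t hmem).ne')
  refine eq_zero_of_infinite_isRoot P fun hfin ↦ ?_
  have null : volume (Set.Ioo a b) = 0 := by
    rw [← Measure.restrict_eq_zero, ← ae_eq_bot, ← empty_mem_iff_bot]
    filter_upwards [ae_root, ae_restrict_of_ae (hfin.countable.ae_notMem volume)] with t ht ht'
    exact ht' ht
  rw [Real.volume_Ioo, ENNReal.ofReal_eq_zero] at null
  linarith [hw.lt]

lemma eq_zero_of_L1K_eq_zero (hL : 0 < L) (hw : ∀ ℓ < L, IsWeightOn w (a ℓ) (b ℓ)) {P : ℝ[X]}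
    (hP : L1K L a b w P = 0) : P = 0 :=
  (hw 0 hL).eq_zero_of_integral_abs_eval_div_eq_zero <|
    (Finset.sum_eq_zero_iff_of_nonneg fun ℓ hℓ ↦
      (hw ℓ (Finset.mem_range.1 hℓ)).integral_abs_eval_div_nonneg P).1 hP 0
        (Finset.mem_range.2 hL)

end Norms

section Seminorm

variable {E : Type*} [NormedAddCommGroup E] [NormedSpace ℝ E] [FiniteDimensional ℝ E]

lemma continuous_seminorm (p : Seminorm ℝ E) : Continuous p :=
  p.convexOn.locallyLipschitz.continuous

lemma exists_pos_mul_norm_le_seminorm (p : Seminorm ℝ E) (hp : ∀ x, p x = 0 → x = 0) :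
    ∃ c > 0, ∀ x, c * ‖x‖ ≤ p x := by
  rcases subsingleton_or_nontrivial E with _ | _
  · exact ⟨1, one_pos, fun x ↦ by simp [Subsingleton.elim x 0]⟩
  have := FiniteDimensional.proper_real E
  obtain ⟨x₀, hx₀, hmin⟩ := (isCompact_sphere (0 : E) 1).exists_isMinOn
    (NormedSpace.sphere_nonempty.2 zero_le_one) (continuous_seminorm p).continuousOn
  have hx₀' : x₀ ≠ 0 := ne_zero_of_mem_unit_sphere ⟨x₀, hx₀⟩
  refine ⟨p x₀, (apply_nonneg p x₀).lt_of_ne fun h ↦ hx₀' (hp x₀ h.symm), fun x ↦ ?_⟩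
  rcases eq_or_ne x 0 with rfl | hx
  · simp
  have hle : p x₀ ≤ p (‖x‖⁻¹ • x) := hmin (by simp [norm_smul, hx])
  rwa [map_smul_eq_mul, norm_inv, norm_norm, inv_mul_eq_div, le_div_iff₀ (norm_pos_iff.2 hx)] at hle

end Seminorm

section ApproximateMinimization

variable {ι E : Type*} [SeminormedAddCommGroup E] {l : Filter ι} {F : E → ℝ} {Fd : ι → E → ℝ}
  {η : ι → ℝ} {A : Set E} {x : ι → E} {u : E}

lemma le_add_mul_norm_of_isMinOn (hle : ∀ d v, Fd d v ≤ F v)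
    (hge : ∀ d v, F v ≤ Fd d v + η d * ‖v‖) {d : ι} {y v : E} (hy : IsMinOn (Fd d) A y)
    (hv : v ∈ A) : F y ≤ F v + η d * ‖y‖ :=
  (hge d y).trans (by gcongr; exact (hy hv).trans (hle d v))

lemma exists_eventually_norm_le_of_isMinOn {c : ℝ} (hc : 0 < c) (hF : ∀ v, c * ‖v‖ ≤ F v)
    (hle : ∀ d v, Fd d v ≤ F v) (hge : ∀ d v, F v ≤ Fd d v + η d * ‖v‖)
    (hη : Tendsto η l (nhds 0)) (hA : A.Nonempty) (hx : ∀ᶠ d in l, IsMinOn (Fd d) A (x d)) :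
    ∃ R, ∀ᶠ d in l, ‖x d‖ ≤ R := by
  obtain ⟨v, hv⟩ := hA
  refine ⟨2 * F v / c, ?_⟩
  filter_upwards [hx, hη.eventually_le_const (half_pos hc)] with d hd hηd
  rw [le_div_iff₀ hc]
  nlinarith [le_add_mul_norm_of_isMinOn hle hge hd hv, hF (x d), norm_nonneg (x d)]

lemma isMinOn_of_tendsto_of_isMinOn [l.NeBot] (hF : Continuous F)
    (hle : ∀ d v, Fd d v ≤ F v) (hge : ∀ d v, F v ≤ Fd d v + η d * ‖v‖)
    (hη : Tendsto η l (nhds 0)) (hx : ∀ᶠ d in l, IsMinOn (Fd d) A (x d))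
    (hu : Tendsto x l (nhds u)) : IsMinOn F A u := by
  intro v hv
  have hlim : Tendsto (fun d ↦ F v + η d * ‖x d‖) l (nhds (F v)) := by
    simpa only [zero_mul, add_zero] using (hη.mul hu.norm).const_add (F v)
  exact le_of_tendsto_of_tendsto ((hF.tendsto u).comp hu) hlim
    (hx.mono fun d hd ↦ le_add_mul_norm_of_isMinOn hle hge hd hv)

lemma isMinOn_of_mapClusterPt_of_isMinOn (hF : Continuous F)
    (hle : ∀ d v, Fd d v ≤ F v) (hge : ∀ d v, F v ≤ Fd d v + η d * ‖v‖)
    (hη : Tendsto η l (nhds 0)) (hx : ∀ᶠ d in l, IsMinOn (Fd d) A (x d))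
    (hu : MapClusterPt u l x) : IsMinOn F A u := by
  obtain ⟨𝒰, h𝒰, hu⟩ := mapClusterPt_iff_ultrafilter.1 hu
  exact isMinOn_of_tendsto_of_isMinOn hF hle hge (hη.mono_left h𝒰) (hx.filter_mono h𝒰) hu

end ApproximateMinimization

section Monic

variable {N : ℕ} {F : ℝ[X] → ℝ} {P : ℝ[X]}

/-- `P` minimizes `F` among the monic polynomials of degree `N`, and is one of them. -/
def IsMonicMinimizer (N : ℕ) (F : ℝ[X] → ℝ) (P : ℝ[X]) : Prop :=
  P.Monic ∧ P.natDegree = N ∧ ∀ Q : ℝ[X], Q.Monic → Q.natDegree = N → F P ≤ F Q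

/-- The affine hyperplane of coefficient vectors of monic polynomials of degree `N`. -/
def monicSlice (N : ℕ) : Set (Fin (N + 1) → ℝ) := {v | v (Fin.last N) = 1}

lemma isClosed_monicSlice (N : ℕ) : IsClosed (monicSlice N) :=
  isClosed_eq (continuous_apply _) continuous_const

lemma monicSlice_nonempty (N : ℕ) : (monicSlice N).Nonempty := ⟨1, rfl⟩

lemma monic_and_natDegree_ofFn {v : Fin (N + 1) → ℝ} (hv : v ∈ monicSlice N) :
    (ofFn (N + 1) v).Monic ∧ (ofFn (N + 1) v).natDegree = N := by
  have hcoeff : (ofFn (N + 1) v).coeff N = 1 := (ofFn_coeff_eq_val_of_lt v N.lt_succ_self).trans hv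
  have hdeg := natDegree_ofFn_succ_le v
  exact ⟨monic_of_natDegree_le_of_coeff_eq_one N hdeg hcoeff,
    natDegree_eq_of_le_of_coeff_ne_zero hdeg (hcoeff ▸ one_ne_zero)⟩

lemma toFn_mem_monicSlice (hP : P.Monic) (hdeg : P.natDegree = N) :
    toFn (N + 1) P ∈ monicSlice N := by
  subst hdeg
  exact hP

lemma ofFn_toFn_eq (hdeg : P.natDegree = N) : ofFn (N + 1) (toFn (N + 1) P) = P :=
  ofFn_comp_toFn_eq_id_of_natDegree_lt (Nat.lt_succ_of_le hdeg.le)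

lemma IsMonicMinimizer.isMinOn_toFn (hP : IsMonicMinimizer N F P) :
    IsMinOn (fun v ↦ F (ofFn (N + 1) v)) (monicSlice N) (toFn (N + 1) P) := by
  refine isMinOn_iff.2 fun v hv ↦ ?_
  obtain ⟨hmonic, hdeg⟩ := monic_and_natDegree_ofFn hv
  simpa only [ofFn_toFn_eq hP.2.1] using hP.2.2 _ hmonic hdeg

lemma isMonicMinimizer_ofFn {v : Fin (N + 1) → ℝ} (hv : v ∈ monicSlice N)
    (hmin : IsMinOn (fun v ↦ F (ofFn (N + 1) v)) (monicSlice N) v) :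
    IsMonicMinimizer N F (ofFn (N + 1) v) := by
  obtain ⟨hmonic, hdeg⟩ := monic_and_natDegree_ofFn hv
  refine ⟨hmonic, hdeg, fun Q hQ hQdeg ↦ ?_⟩
  simpa only [ofFn_toFn_eq hQdeg] using isMinOn_iff.1 hmin _ (toFn_mem_monicSlice hQ hQdeg)

lemma tendsto_coeff_of_tendsto_toFn {ι : Type*} {l : Filter ι} {V : ι → ℝ[X]}
    {v : Fin (N + 1) → ℝ} (hdeg : ∀ᶠ d in l, (V d).natDegree = N)
    (hV : Tendsto (fun d ↦ toFn (N + 1) (V d)) l (nhds v)) (n : ℕ) :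
    Tendsto (fun d ↦ (V d).coeff n) l (nhds ((ofFn (N + 1) v).coeff n)) := by
  rcases lt_or_ge n (N + 1) with hn | hn
  · rw [ofFn_coeff_eq_val_of_lt v hn]
    exact tendsto_pi_nhds.1 hV ⟨n, hn⟩
  · rw [ofFn_coeff_eq_zero_of_ge v hn]
    refine tendsto_const_nhds.congr' (hdeg.mono fun d hd ↦ ?_)
    exact (coeff_eq_zero_of_natDegree_lt (by lia)).symm

end Monic

section Convergence

variable {L N : ℕ} {a b : ℕ → ℝ} {w : ℝ → ℝ}

lemma continuous_L1K_ofFn (hw : ∀ ℓ < L, IsWeightOn w (a ℓ) (b ℓ)) (N : ℕ) :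
    Continuous fun v ↦ L1K L a b w (ofFn (N + 1) v) :=
  continuous_seminorm ((L1KSeminorm hw).comp (ofFn (N + 1)))

lemma exists_pos_mul_norm_le_L1K_ofFn (hL : 0 < L) (hw : ∀ ℓ < L, IsWeightOn w (a ℓ) (b ℓ))
    (N : ℕ) : ∃ c > 0, ∀ v, c * ‖v‖ ≤ L1K L a b w (ofFn (N + 1) v) := by
  refine exists_pos_mul_norm_le_seminorm ((L1KSeminorm hw).comp (ofFn (N + 1))) fun v hv ↦ ?_
  exact (map_eq_zero_iff _ (injective_ofFn (N + 1))).1 (eq_zero_of_L1K_eq_zero hL hw hv)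

variable {V : ℕ → ℝ[X]}

lemma eventually_isMinOn_ersatz_toFn
    (hV : ∀ d, N ≤ d → IsMonicMinimizer N (ersatz L N d a b w) (V d)) :
    ∀ᶠ d in atTop, IsMinOn (fun v ↦ ersatz L N d a b w (ofFn (N + 1) v)) (monicSlice N)
      (toFn (N + 1) (V d)) :=
  (eventually_ge_atTop N).mono fun d hd ↦ (hV d hd).isMinOn_toFn

lemma exists_eventually_norm_toFn_le (hL : 0 < L) (hw : ∀ ℓ < L, IsWeightOn w (a ℓ) (b ℓ))
    (hV : ∀ d, N ≤ d → IsMonicMinimizer N (ersatz L N d a b w) (V d)) :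
    ∃ R, ∀ᶠ d in atTop, ‖toFn (N + 1) (V d)‖ ≤ R := by
  obtain ⟨η, hη, hge⟩ := exists_tendsto_L1K_ofFn_le hw N
  obtain ⟨c, hc, hcoercive⟩ := exists_pos_mul_norm_le_L1K_ofFn hL hw N
  exact exists_eventually_norm_le_of_isMinOn hc hcoercive
    (fun _ v ↦ ersatz_le_L1K hw (natDegree_ofFn_succ_le v)) hge hη (monicSlice_nonempty N)
    (eventually_isMinOn_ersatz_toFn hV)

lemma isMonicMinimizer_of_mapClusterPt (hw : ∀ ℓ < L, IsWeightOn w (a ℓ) (b ℓ))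
    (hV : ∀ d, N ≤ d → IsMonicMinimizer N (ersatz L N d a b w) (V d)) {v : Fin (N + 1) → ℝ}
    (hv : MapClusterPt v atTop fun d ↦ toFn (N + 1) (V d)) :
    IsMonicMinimizer N (L1K L a b w) (ofFn (N + 1) v) := by
  obtain ⟨η, hη, hge⟩ := exists_tendsto_L1K_ofFn_le hw N
  refine isMonicMinimizer_ofFn ((isClosed_monicSlice N).mem_of_mapClusterPt hv ?_)
    (isMinOn_of_mapClusterPt_of_isMinOn (continuous_L1K_ofFn hw N)
      (fun _ v ↦ ersatz_le_L1K hw (natDegree_ofFn_succ_le v)) hge hη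
      (eventually_isMinOn_ersatz_toFn hV) hv)
  exact (eventually_ge_atTop N).mono fun d hd ↦ toFn_mem_monicSlice (hV d hd).1 (hV d hd).2.1

theorem exists_subseq_tendsto_isMonicMinimizer (hL : 0 < L)
    (hw : ∀ ℓ < L, IsWeightOn w (a ℓ) (b ℓ))
    (hV : ∀ d, N ≤ d → IsMonicMinimizer N (ersatz L N d a b w) (V d)) :
    ∃ φ : ℕ → ℕ, StrictMono φ ∧ (∀ m, N ≤ φ m) ∧ ∃ U, IsMonicMinimizer N (L1K L a b w) U ∧
      ∀ n, Tendsto (fun m ↦ (V (φ m)).coeff n) atTop (nhds (U.coeff n)) := by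
  obtain ⟨R, hR⟩ := exists_eventually_norm_toFn_le hL hw hV
  obtain ⟨v, -, φ, hφ, hv⟩ := tendsto_subseq_of_frequently_bounded
    (Metric.isBounded_closedBall (x := 0) (r := R))
    (hR.mono fun _ ↦ mem_closedBall_zero_iff.2).frequently
  have hdeg : ∀ m, N ≤ φ (m + N) := fun m ↦ (Nat.le_add_left N m).trans hφ.le_apply
  exact ⟨fun m ↦ φ (m + N), hφ.comp (strictMono_id.add_const N), hdeg, ofFn (N + 1) v,
    isMonicMinimizer_of_mapClusterPt hw hV (hv.mapClusterPt.of_comp hφ.tendsto_atTop),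
    tendsto_coeff_of_tendsto_toFn (.of_forall fun m ↦ (hV _ (hdeg m)).2.1)
      (hv.comp (tendsto_add_atTop_nat N))⟩

theorem tendsto_coeff_of_unique_isMonicMinimizer (hL : 0 < L)
    (hw : ∀ ℓ < L, IsWeightOn w (a ℓ) (b ℓ))
    (hV : ∀ d, N ≤ d → IsMonicMinimizer N (ersatz L N d a b w) (V d)) {U : ℝ[X]}
    (hU : ∀ Q, IsMonicMinimizer N (L1K L a b w) Q → Q = U) (n : ℕ) :
    Tendsto (fun d ↦ (V d).coeff n) atTop (nhds (U.coeff n)) := by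
  obtain ⟨R, hR⟩ := exists_eventually_norm_toFn_le hL hw hV
  have hcluster : ∀ v, MapClusterPt v atTop (fun d ↦ toFn (N + 1) (V d)) → ofFn (N + 1) v = U :=
    fun v hv ↦ hU _ (isMonicMinimizer_of_mapClusterPt hw hV hv)
  have hlim : Tendsto (fun d ↦ toFn (N + 1) (V d)) atTop (nhds (toFn (N + 1) U)) :=
    (isCompact_closedBall 0 R).tendsto_nhds_of_unique_mapClusterPt
      (hR.mono fun _ ↦ mem_closedBall_zero_iff.2)
      fun v _ hv ↦ by rw [← hcluster v hv, toFn_comp_ofFn_eq_id]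
  rw [← hcluster _ hlim.mapClusterPt]
  exact tendsto_coeff_of_tendsto_toFn
    ((eventually_ge_atTop N).mono fun d hd ↦ (hV d hd).2.1) hlim n

end Convergence

theorem ersatz_minimizers_converge_general {L : ℕ} (hL : 0 < L) {a b : ℕ → ℝ} {w : ℝ → ℝ}
    (hw : ∀ ℓ < L, IsWeightOn w (a ℓ) (b ℓ)) {N : ℕ} {V : ℕ → ℝ[X]}
    (hV : ∀ d, N ≤ d → IsMonicMinimizer N (ersatz L N d a b w) (V d)) :
    (∃ φ : ℕ → ℕ, StrictMono φ ∧ (∀ m, N ≤ φ m) ∧ ∃ U, IsMonicMinimizer N (L1K L a b w) U ∧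
      ∀ n, Tendsto (fun m ↦ (V (φ m)).coeff n) atTop (nhds (U.coeff n))) ∧
    ∀ U, (∀ Q, IsMonicMinimizer N (L1K L a b w) Q → Q = U) →
      ∀ n, Tendsto (fun d ↦ (V d).coeff n) atTop (nhds (U.coeff n)) :=
  ⟨exists_subseq_tendsto_isMonicMinimizer hL hw hV,
    fun _ ↦ tendsto_coeff_of_unique_isMonicMinimizer hL hw hV⟩

/-- Let `V d` be, for each `d ≥ N`, a monic polynomial of degree `N` minimizing `⫽·⫽_d`
among monic polynomials of degree `N`. Then (i) some subsequence of `(V d)` converges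
coefficientwise to a monic polynomial of degree `N` minimizing `‖·/w‖_{L1(K)}` among monic
polynomials of degree `N`; and (ii) if the `L1` minimizer `U` is unique, the whole
sequence `(V d)` converges coefficientwise to `U`. -/
theorem ersatz_minimizers_converge
    (L : ℕ) (hL : 0 < L) (a b : ℕ → ℝ)
    (ha0 : a 0 = -1) (hbL : b (L - 1) = 1)
    (hab : ∀ ℓ < L, a ℓ < b ℓ)
    (hgap : ∀ ℓ, ℓ + 1 < L → b ℓ < a (ℓ + 1))
    (w : ℝ → ℝ)
    (hw : ContinuousOn w (⋃ ℓ ∈ Finset.range L, Set.Icc (a ℓ) (b ℓ)))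
    (hwpos : ∀ x ∈ ⋃ ℓ ∈ Finset.range L, Set.Icc (a ℓ) (b ℓ), 0 < w x)
    (N : ℕ) (hN : 1 ≤ N)
    (V : ℕ → Polynomial ℝ)
    (hV : ∀ d, N ≤ d → (V d).Monic ∧ (V d).natDegree = N ∧
      ∀ Q : Polynomial ℝ, Q.Monic → Q.natDegree = N →
        ersatz L N d a b w (V d) ≤ ersatz L N d a b w Q) :
    (∃ φ : ℕ → ℕ, StrictMono φ ∧ (∀ m, N ≤ φ m) ∧
      ∃ Ustar : Polynomial ℝ, Ustar.Monic ∧ Ustar.natDegree = N ∧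
        (∀ Q : Polynomial ℝ, Q.Monic → Q.natDegree = N →
          L1K L a b w Ustar ≤ L1K L a b w Q) ∧
        ∀ n : ℕ, Tendsto (fun m => (V (φ m)).coeff n) atTop (nhds (Ustar.coeff n))) ∧
    (∀ U : Polynomial ℝ, U.Monic → U.natDegree = N →
      (∀ Q : Polynomial ℝ, Q.Monic → Q.natDegree = N →
        L1K L a b w U ≤ L1K L a b w Q) →
      (∀ Q : Polynomial ℝ, Q.Monic → Q.natDegree = N →
        (∀ R : Polynomial ℝ, R.Monic → R.natDegree = N →
          L1K L a b w Q ≤ L1K L a b w R) → Q = U) →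
      ∀ n : ℕ, Tendsto (fun d => (V d).coeff n) atTop (nhds (U.coeff n))) := by
  obtain ⟨⟨φ, hφ, hNφ, U, ⟨hmonic, hdeg, hmin⟩, hlim⟩, hunique⟩ :=
    ersatz_minimizers_converge_general hL (isWeightOn_of_continuousOn_biUnion hab hw hwpos) hV
  exact ⟨⟨φ, hφ, hNφ, U, hmonic, hdeg, hmin, hlim⟩,
    fun U _ _ _ hU ↦ hunique U fun Q hQ ↦ hU Q hQ.1 hQ.2.1 hQ.2.2⟩
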